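/- Let n be a positive even integer and z ∈ I^FPF_n. For each N ≥ n, let p_N ∈ ℤ[β][x_1,…,x_n] be the polynomial obtained from the symplectic Grothendieck polynomial 𝔊^Sp_{(21)^N × z} ∈ ℤ[β][x_1,…,x_{2N+n}] by substituting x_j = 0 for all j > n. Then p_N = p_{N'} for all N, N' ≥ n, and this common polynomial is symmetric in x_1,…,x_n (invariant under all permutations of these variables). -/

import Mathlib

open MvPolynomial

noncomputable section

/-- The coefficient ring `ℤ[β]`. -/
abbrev Rb : Type := Polynomial ℤ

/-- The indeterminate `β`. -/
def bb : Rb := Polynomial.X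

/-- The order-reversing permutation `n⋯321`, i.e. `i ↦ n+1-i` in 1-indexed notation. -/
def revPerm (n : ℕ) : Equiv.Perm (Fin n) :=
  ⟨Fin.rev, Fin.rev, fun i => Fin.rev_rev i, fun i => Fin.rev_rev i⟩

/-- `z` is a fixed-point-free involution. -/
def IsFPF {n : ℕ} (z : Equiv.Perm (Fin n)) : Prop :=
  z * z = 1 ∧ ∀ i, z i ≠ i

/-- `x_i + x_j + β x_i x_j`. -/
def oplus {n : ℕ} (i j : Fin n) : MvPolynomial (Fin n) Rb :=
  X i + X j + C bb * (X i * X j)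

/-- `IsDivDiffB i j f g` encodes `∂_i^{(β)} f = g` where `j = i+1`:
`∂_i^{(β)} f = ((1+βx_j) f - s_i((1+βx_j) f)) / (x_i - x_j)`, stated multiplicatively
(the quotient is exact, and `g` is uniquely determined since the ring is a domain). -/
def IsDivDiffB {n : ℕ} (i j : Fin n) (f g : MvPolynomial (Fin n) Rb) : Prop :=
  (X i - X j) * g =
    (1 + C bb * X j) * f - rename ⇑(Equiv.swap i j) ((1 + C bb * X j) * f)

/-- `∏_{1 ≤ i < j ≤ n-i} (x_i + x_j + β x_i x_j)` (variables 0-indexed). -/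
def spTop (n : ℕ) : MvPolynomial (Fin n) Rb :=
  ∏ p ∈ Finset.univ.filter
      (fun p : Fin n × Fin n => p.1 < p.2 ∧ (p.1 : ℕ) + (p.2 : ℕ) + 2 ≤ n),
    oplus p.1 p.2

/-- `x_1^{n-1} x_2^{n-2} ⋯ x_{n-1}^1` (variables 0-indexed). -/
def grTop (n : ℕ) : MvPolynomial (Fin n) Rb :=
  ∏ a : Fin n, X a ^ (n - 1 - (a : ℕ))

/-- The defining property of the family of symplectic Grothendieck polynomials. -/
def IsSpFam (n : ℕ) (G : Equiv.Perm (Fin n) → MvPolynomial (Fin n) Rb) : Prop :=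
  G (revPerm n) = spTop n ∧
    ∀ z : Equiv.Perm (Fin n), IsFPF z →
      ∀ i j : Fin n, (j : ℕ) = (i : ℕ) + 1 →
        z i ≠ j → z j ≠ i → z j < z i →
          IsDivDiffB i j (G z) (G (Equiv.swap i j * z * Equiv.swap i j))

/-- The defining property of the family of Grothendieck polynomials. -/
def IsGrothFam (n : ℕ) (G : Equiv.Perm (Fin n) → MvPolynomial (Fin n) Rb) : Prop :=
  G (revPerm n) = grTop n ∧
    ∀ (w : Equiv.Perm (Fin n)) (i j : Fin n), (j : ℕ) = (i : ℕ) + 1 →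
      w j < w i → IsDivDiffB i j (G w) (G (w * Equiv.swap i j))

/-- The length (number of inversions) of a permutation. -/
def invLen {n : ℕ} (w : Equiv.Perm (Fin n)) : ℕ :=
  (Finset.univ.filter (fun p : Fin n × Fin n => p.1 < p.2 ∧ w p.2 < w p.1)).card

/-- The fixed-point-free involution length `ℓ_fpf(z) = #{(i,j) : z(i) > z(j) < i < j}`. -/
def fpfLen {n : ℕ} (z : Equiv.Perm (Fin n)) : ℕ :=
  (Finset.univ.filter
      (fun p : Fin n × Fin n => z p.2 < z p.1 ∧ z p.2 < p.1 ∧ p.1 < p.2)).card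

/-- The underlying function of `Θ = (1,2)(3,4)⋯(n-1,n)`. -/
def thetaFun (n : ℕ) (hn : n % 2 = 0) (i : Fin n) : Fin n :=
  ⟨if (i : ℕ) % 2 = 0 then (i : ℕ) + 1 else (i : ℕ) - 1, by
    have hi := i.isLt
    split_ifs with h <;> omega⟩

/-- The fixed-point-free involution `Θ = (1,2)(3,4)⋯(n-1,n)`. -/
def theta (n : ℕ) (hn : n % 2 = 0) : Equiv.Perm (Fin n) :=
  Function.Involutive.toPerm (thetaFun n hn) (by
    intro i
    have hi := i.isLt
    apply Fin.ext
    simp only [thetaFun]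
    split_ifs <;> omega)

/-- One step of the partial Hecke action: `heckeStep a z = some (z · s_{a+1})` when defined,
with `a` a 0-indexed letter (so `a` corresponds to the simple transposition of `a+1, a+2`
in 1-indexed notation). -/
def heckeStep {n : ℕ} (a : ℕ) (z : Equiv.Perm (Fin n)) : Option (Equiv.Perm (Fin n)) :=
  if h : a + 1 < n then
    let i : Fin n := ⟨a, Nat.lt_of_succ_lt h⟩
    let j : Fin n := ⟨a + 1, h⟩
    if z i < z j then some (Equiv.swap i j * z * Equiv.swap i j)
    else if z i = j ∧ z j = i then none
    else if z i ≠ j ∧ z j ≠ i ∧ z j < z i then some z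
    else none
  else none

/-- Apply a word of (0-indexed) letters to `z` via the partial Hecke action. -/
def heckeApply {n : ℕ} (l : List ℕ) (z : Equiv.Perm (Fin n)) :
    Option (Equiv.Perm (Fin n)) :=
  l.foldl (fun o a => o.bind (heckeStep a)) (some z)

/-- The simple transposition corresponding to the 0-indexed letter `a`. -/
def swapAt (n : ℕ) (a : ℕ) : Equiv.Perm (Fin n) :=
  if h : a + 1 < n then Equiv.swap ⟨a, Nat.lt_of_succ_lt h⟩ ⟨a + 1, h⟩ else 1

/-- The permutation `s_{i_1} s_{i_2} ⋯ s_{i_l}` of a word. -/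
def wordToPerm (n : ℕ) (l : List ℕ) : Equiv.Perm (Fin n) := (l.map (swapAt n)).prod

/-- `l` is a reduced word for `w`. -/
def IsReducedWord (n : ℕ) (w : Equiv.Perm (Fin n)) (l : List ℕ) : Prop :=
  (∀ a ∈ l, a + 1 < n) ∧ wordToPerm n l = w ∧ l.length = invLen w

/-- The set of Hecke atoms `B_fpf(z)`. -/
def Bfpf (n : ℕ) (hn : n % 2 = 0) (z : Equiv.Perm (Fin n)) :
    Finset (Equiv.Perm (Fin n)) :=
  @Finset.filter _
    (fun w => ∃ l : List ℕ, IsReducedWord n w l ∧ heckeApply l (theta n hn) = some z)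
    (Classical.decPred _) Finset.univ

/-- `extPerm z w` is the permutation `z × w` acting on the first `m` letters by `z`
and the last `n` letters by `w`. -/
def extPerm {m n : ℕ} (z : Equiv.Perm (Fin m)) (w : Equiv.Perm (Fin n)) :
    Equiv.Perm (Fin (m + n)) :=
  finSumFinEquiv.symm.trans ((Equiv.sumCongr z w).trans finSumFinEquiv)

/-- `rank(z_{[i][j]}) = #{k ∈ [j] : z(k) ≤ i}` (1-indexed sizes `i, j`). -/
def permRank {n : ℕ} (z : Equiv.Perm (Fin n)) (i j : ℕ) : ℕ :=
  (Finset.univ.filter (fun k : Fin n => (k : ℕ) < j ∧ ((z k : Fin n) : ℕ) < i)).card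

/-- The rank of the upper-left `i × j` corner of `A` (1-indexed sizes `i, j ≤ n`). -/
def cornerRank {n : ℕ} (A : Matrix (Fin n) (Fin n) ℂ) (i j : ℕ) : ℕ :=
  Matrix.rank (Matrix.of fun (a : Fin (min i n)) (b : Fin (min j n)) =>
    A ⟨(a : ℕ), lt_of_lt_of_le a.isLt (min_le_right i n)⟩
      ⟨(b : ℕ), lt_of_lt_of_le b.isLt (min_le_right j n)⟩)

/-- The orthogonal Rothe diagram `D^O(z) = {(i, z(j)) : z(i) > z(j) ≤ i < j}` (0-indexed). -/
def DO (n : ℕ) (z : Equiv.Perm (Fin n)) : Finset (Fin n × Fin n) :=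
  Finset.image (fun p : Fin n × Fin n => (p.1, z p.2))
    (Finset.univ.filter (fun p : Fin n × Fin n => z p.2 < z p.1 ∧ z p.2 ≤ p.1 ∧ p.1 < p.2))

/-- The symplectic Rothe diagram `D^Sp(z) = {(i, z(j)) : z(i) > z(j) < i < j}` (0-indexed). -/
def DSp (n : ℕ) (z : Equiv.Perm (Fin n)) : Finset (Fin n × Fin n) :=
  Finset.image (fun p : Fin n × Fin n => (p.1, z p.2))
    (Finset.univ.filter (fun p : Fin n × Fin n => z p.2 < z p.1 ∧ z p.2 < p.1 ∧ p.1 < p.2))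

/-- The essential set `Ess(D) = {(i,j) ∈ D : (i,j+1) ∉ D and (i+1,j) ∉ D}`. -/
def Ess {n : ℕ} (D : Finset (Fin n × Fin n)) : Finset (Fin n × Fin n) :=
  D.filter (fun p =>
    (∀ q ∈ D, ¬(q.1 = p.1 ∧ (q.2 : ℕ) = (p.2 : ℕ) + 1)) ∧
    (∀ q ∈ D, ¬((q.1 : ℕ) = (p.1 : ℕ) + 1 ∧ q.2 = p.2)))

/-- A permutation is vexillary if it avoids the pattern 2143. -/
def Vexillary {n : ℕ} (z : Equiv.Perm (Fin n)) : Prop :=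
  ¬ ∃ i j k l : Fin n, i < j ∧ j < k ∧ k < l ∧ z j < z i ∧ z i < z l ∧ z l < z k

/-- The ideal of `ℤ[x_1,…,x_N]` generated by symmetric polynomials with zero constant term. -/
def ILambda (N : ℕ) : Ideal (MvPolynomial (Fin N) ℤ) :=
  Ideal.span {f : MvPolynomial (Fin N) ℤ |
    (∀ σ : Equiv.Perm (Fin N), rename (⇑σ) f = f) ∧ coeff 0 f = 0}

/-- Substitute `x_j = 0` for all `j > n`, producing a polynomial in `x_1,…,x_n`. -/
def truncVars (n N : ℕ) (f : MvPolynomial (Fin N) Rb) : MvPolynomial (Fin n) Rb :=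
  aeval (fun i : Fin N => if h : (i : ℕ) < n then X ⟨(i : ℕ), h⟩ else 0) f

/-- The order used to list the elements of a pipe-dream subset `S`:
rows weakly increasing, columns strictly decreasing within a row. -/
def rowOrder {n : ℕ} (p q : Fin n × Fin n) : Prop :=
  p.1 < q.1 ∨ (p.1 = q.1 ∧ q.2 < p.2)

/-- `δ(S)` is a symplectic Hecke word for `z` (with Hecke words computed from `Θ`);
here `L` is the listing of `S` in the order `rowOrder`, and `(a,b) ∈ S` (0-indexed)
contributes the 0-indexed letter `a + b`, i.e. the 1-indexed letter `(b+1)+(a+1)-1`. -/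
def DeltaHeckeWord (n : ℕ) (hn : n % 2 = 0) (z : Equiv.Perm (Fin n))
    (S : Finset (Fin n × Fin n)) : Prop :=
  ∃ L : List (Fin n × Fin n), L.toFinset = S ∧ L.Chain' rowOrder ∧
    heckeApply (L.map (fun p => (p.1 : ℕ) + (p.2 : ℕ))) (theta n hn) = some z

/-!
The operators `∂_i^{(β)}` satisfy the braid relation, and `∂_i^{(β)} f = -β f` exactly when `f` is
symmetric in `x_i, x_{i+1}`. Induction down from `n⋯321` then shows that `𝔊^Sp_z` is symmetric in
`x_i, x_{i+1}` whenever `z(i) = i + 1`; at an ascent `z(i) < z(i+1)` the same symmetry holds because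
`𝔊^Sp_z` lies in the image of `∂_i^{(β)}`. Hence `𝔊^Sp_{(21)^N × z}` is symmetric in its first
`2N + 1` variables, and so is its truncation to at most `2N` variables.

For stability, insert into a fixed-point-free involution `y` of `m` letters an arc joining a new
first letter to a letter in position `k + 1`, and set the two new variables to zero. For
`y = m⋯321` descending induction on `k` evaluates the result as `𝔊^Sp_{m⋯321} x_1 ⋯ x_{k-1}`. At
`k = 1` there is no extra factor, so `y ↦ 𝔊^Sp_{21 × y}` with its first two variables killed is the
symplectic family on `m` letters, which is unique. Since `𝔊^Sp_{(21)^{N+1} × z}` is symmetric in its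
first `2N + 3` variables, killing the first two of them has the same effect, after truncation to at
most `2N` variables, as killing two of the later ones, which truncation kills anyway.
-/

section DividedDifference

variable {σ R : Type*} [CommRing R]

theorem X_sub_X_ne_zero [Nontrivial R] {i j : σ} (hij : i ≠ j) :
    (X i - X j : MvPolynomial σ R) ≠ 0 :=
  sub_ne_zero.mpr (X_injective.ne hij)

theorem one_add_C_mul_X_ne_zero [Nontrivial R] (β : R) (i : σ) :
    (1 + C β * X i : MvPolynomial σ R) ≠ 0 := fun h => by
  simpa using congrArg constantCoeff h

theorem rename_perm_mul {R : Type*} [CommSemiring R] (s t : Equiv.Perm σ) (f : MvPolynomial σ R) :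
    rename (s * t) f = rename s (rename t f) := by
  rw [rename_rename, Equiv.Perm.coe_mul]

variable [DecidableEq σ]

theorem X_sub_X_dvd_sub_rename_swap (i j : σ) (f : MvPolynomial σ R) :
    X i - X j ∣ f - rename (Equiv.swap i j) f := by
  let I : Ideal (MvPolynomial σ R) := Ideal.span {X i - X j}
  have hX : Ideal.Quotient.mkₐ R I (X i) = Ideal.Quotient.mkₐ R I (X j) :=
    Ideal.Quotient.eq.mpr (Ideal.mem_span_singleton_self _)
  have hcomp : (Ideal.Quotient.mkₐ R I).comp (rename (Equiv.swap i j)) =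
      Ideal.Quotient.mkₐ R I := by
    ext a
    rw [AlgHom.comp_apply, rename_X, Equiv.swap_apply_def]
    split_ifs with hi hj
    · rw [hi, hX]
    · rw [hj, hX]
    · rfl
  exact Ideal.mem_span_singleton.mp (Ideal.Quotient.eq.mp (DFunLike.congr_fun hcomp f).symm)

/-- The operator `∂^{(β)}` attached to the transposition of the variables `x_i` and `x_j`, namely
`f ↦ ((1 + β x_j) f - (1 + β x_i) s f) / (x_i - x_j)` with `s` the transposition. The quotient is
only determined for `i ≠ j`. -/
def divDiff (β : R) (i j : σ) (f : MvPolynomial σ R) : MvPolynomial σ R :=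
  (X_sub_X_dvd_sub_rename_swap i j ((1 + C β * X j) * f)).choose

variable (β : R)

theorem X_sub_X_mul_divDiff (i j : σ) (f : MvPolynomial σ R) :
    (X i - X j) * divDiff β i j f =
      (1 + C β * X j) * f - (1 + C β * X i) * rename (Equiv.swap i j) f := by
  rw [divDiff,
    ← (X_sub_X_dvd_sub_rename_swap i j ((1 + C β * X j) * f)).choose_spec]
  simp only [map_mul, map_add, map_one, rename_C, rename_X, Equiv.swap_apply_right]

theorem X_sub_X_mul_rename_divDiff (s : Equiv.Perm σ) (i j : σ) (f : MvPolynomial σ R) :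
    (X (s i) - X (s j)) * rename s (divDiff β i j f) =
      (1 + C β * X (s j)) * rename s f -
        (1 + C β * X (s i)) * rename s (rename (Equiv.swap i j) f) := by
  simpa only [map_mul, map_sub, map_add, map_one, rename_C, rename_X] using
    congrArg (rename s) (X_sub_X_mul_divDiff β i j f)

variable [IsDomain R] {i j k l : σ} {f g : MvPolynomial σ R}

theorem eq_divDiff (hij : i ≠ j)
    (h : (X i - X j) * g = (1 + C β * X j) * f - (1 + C β * X i) * rename (Equiv.swap i j) f) :
    g = divDiff β i j f :=
  mul_left_cancel₀ (X_sub_X_ne_zero hij) (h.trans (X_sub_X_mul_divDiff β i j f).symm)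

theorem divDiff_zero (hij : i ≠ j) : divDiff β i j (0 : MvPolynomial σ R) = 0 :=
  (eq_divDiff β hij (by simp only [map_zero, mul_zero, sub_zero])).symm

theorem divDiff_C_mul (hij : i ≠ j) (c : R) (f : MvPolynomial σ R) :
    divDiff β i j (C c * f) = C c * divDiff β i j f := by
  refine (eq_divDiff β hij ?_).symm
  rw [map_mul, rename_C]
  linear_combination C c * X_sub_X_mul_divDiff β i j f

theorem rename_swap_divDiff (hij : i ≠ j) (f : MvPolynomial σ R) :
    rename (Equiv.swap i j) (divDiff β i j f) = divDiff β i j f := by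
  refine eq_divDiff β hij ?_
  have h := X_sub_X_mul_rename_divDiff β (Equiv.swap i j) i j f
  rw [Equiv.swap_apply_left, Equiv.swap_apply_right, ← rename_perm_mul, Equiv.swap_mul_self,
    Equiv.Perm.coe_one, rename_id_apply] at h
  linear_combination -h

theorem divDiff_eq_C_neg_mul_iff (hij : i ≠ j) :
    divDiff β i j f = C (-β) * f ↔ rename (Equiv.swap i j) f = f := by
  have h := X_sub_X_mul_divDiff β i j f
  rw [C_neg]
  constructor
  · intro hf
    rw [hf] at h
    refine mul_left_cancel₀ (one_add_C_mul_X_ne_zero β i) ?_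
    linear_combination h
  · intro hf
    refine (eq_divDiff β hij ?_).symm
    rw [hf]
    ring

theorem divDiff_comm (hij : i ≠ j) (hkl : k ≠ l) (hik : i ≠ k) (hil : i ≠ l) (hjk : j ≠ k)
    (hjl : j ≠ l) (f : MvPolynomial σ R) :
    divDiff β i j (divDiff β k l f) = divDiff β k l (divDiff β i j f) := by
  have hswap : Equiv.swap i j * Equiv.swap k l = Equiv.swap k l * Equiv.swap i j := by
    rw [Equiv.mul_swap_eq_swap_mul, Equiv.swap_apply_of_ne_of_ne hik.symm hjk.symm,
      Equiv.swap_apply_of_ne_of_ne hil.symm hjl.symm]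
  have hf := X_sub_X_mul_divDiff β i j f
  have hsf := X_sub_X_mul_rename_divDiff β (Equiv.swap k l) i j f
  have hg := X_sub_X_mul_divDiff β k l f
  have htg := X_sub_X_mul_rename_divDiff β (Equiv.swap i j) k l f
  rw [← rename_perm_mul, ← hswap, rename_perm_mul, Equiv.swap_apply_of_ne_of_ne hik hil,
    Equiv.swap_apply_of_ne_of_ne hjk hjl] at hsf
  rw [Equiv.swap_apply_of_ne_of_ne hik.symm hjk.symm,
    Equiv.swap_apply_of_ne_of_ne hil.symm hjl.symm] at htg
  refine eq_divDiff β hkl (mul_left_cancel₀ (X_sub_X_ne_zero (R := R) hij) ?_)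
  linear_combination (X k - X l) * X_sub_X_mul_divDiff β i j (divDiff β k l f) +
    (1 + C β * X j) * hg - (1 + C β * X i) * htg - (1 + C β * X l) * hf +
    (1 + C β * X k) * hsf

/-- The alternating sum over the permutations `w` of `x_i, x_j, x_k` of
`w ((1 + β x_j) (1 + β x_k) ^ 2 f)`. -/
def braidSum (i j k : σ) (f : MvPolynomial σ R) : MvPolynomial σ R :=
  (1 + C β * X j) * (1 + C β * X k) ^ 2 * f
    - (1 + C β * X i) * (1 + C β * X k) ^ 2 * rename (Equiv.swap i j) f
    - (1 + C β * X k) * (1 + C β * X j) ^ 2 * rename (Equiv.swap j k) f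
    + (1 + C β * X k) * (1 + C β * X i) ^ 2 *
      rename (Equiv.swap i j) (rename (Equiv.swap j k) f)
    + (1 + C β * X i) * (1 + C β * X j) ^ 2 *
      rename (Equiv.swap j k) (rename (Equiv.swap i j) f)
    - (1 + C β * X j) * (1 + C β * X i) ^ 2 *
      rename (Equiv.swap i j) (rename (Equiv.swap j k) (rename (Equiv.swap i j) f))

theorem vandermonde_mul_divDiff_left (hij : i ≠ j) (hik : i ≠ k) (hjk : j ≠ k)
    (f : MvPolynomial σ R) :
    (X i - X j) * (X i - X k) * (X j - X k) *
      divDiff β i j (divDiff β j k (divDiff β i j f)) = braidSum β i j k f := by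
  set a := divDiff β i j f with ha
  set b := divDiff β j k a with hb
  have hf := X_sub_X_mul_divDiff β i j f
  have htf := X_sub_X_mul_rename_divDiff β (Equiv.swap j k) i j f
  have hstf := X_sub_X_mul_rename_divDiff β (Equiv.swap i j * Equiv.swap j k) i j f
  have hsa := X_sub_X_mul_rename_divDiff β (Equiv.swap i j) j k a
  simp only [← ha, ← hb, rename_perm_mul, Equiv.Perm.mul_apply, Equiv.swap_apply_left,
    Equiv.swap_apply_right, Equiv.swap_apply_of_ne_of_ne hij hik,
    Equiv.swap_apply_of_ne_of_ne hik.symm hjk.symm] at hf htf hstf hsa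
  rw [show rename (Equiv.swap i j) a = a from rename_swap_divDiff β hij f] at hsa
  rw [braidSum]
  linear_combination (X i - X k) * (X j - X k) * X_sub_X_mul_divDiff β i j b +
    (X i - X k) * (1 + C β * X j) * X_sub_X_mul_divDiff β j k a -
    (X j - X k) * (1 + C β * X i) * hsa + (1 + C β * X k) ^ 2 * hf -
    (1 + C β * X j) ^ 2 * htf + (1 + C β * X i) ^ 2 * hstf

theorem vandermonde_mul_divDiff_right (hij : i ≠ j) (hik : i ≠ k) (hjk : j ≠ k)
    (f : MvPolynomial σ R) :
    (X i - X j) * (X i - X k) * (X j - X k) *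
      divDiff β j k (divDiff β i j (divDiff β j k f)) = braidSum β i j k f := by
  set a := divDiff β j k f with ha
  set b := divDiff β i j a with hb
  have hf := X_sub_X_mul_divDiff β j k f
  have hsf := X_sub_X_mul_rename_divDiff β (Equiv.swap i j) j k f
  have htsf := X_sub_X_mul_rename_divDiff β (Equiv.swap j k * Equiv.swap i j) j k f
  have hta := X_sub_X_mul_rename_divDiff β (Equiv.swap j k) i j a
  have hbraid : Equiv.swap j k * Equiv.swap i j * Equiv.swap j k =
      Equiv.swap i j * (Equiv.swap j k * Equiv.swap i j) := by
    rw [Equiv.swap_mul_swap_mul_swap hij hik, ← mul_assoc, Equiv.swap_comm i j,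
      Equiv.swap_comm j k, Equiv.swap_mul_swap_mul_swap hjk.symm hik.symm, Equiv.swap_comm]
  rw [← rename_perm_mul, hbraid] at htsf
  simp only [← ha, ← hb, rename_perm_mul, Equiv.Perm.mul_apply, Equiv.swap_apply_left,
    Equiv.swap_apply_right, Equiv.swap_apply_of_ne_of_ne hij hik,
    Equiv.swap_apply_of_ne_of_ne hik.symm hjk.symm] at hf hsf htsf hta
  rw [show rename (Equiv.swap j k) a = a from rename_swap_divDiff β hjk f] at hta
  rw [braidSum]
  linear_combination (X i - X j) * (X i - X k) * X_sub_X_mul_divDiff β j k b +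
    (X i - X k) * (1 + C β * X k) * X_sub_X_mul_divDiff β i j a -
    (X i - X j) * (1 + C β * X j) * hta + (1 + C β * X j) * (1 + C β * X k) * hf -
    (1 + C β * X k) * (1 + C β * X i) * hsf + (1 + C β * X j) * (1 + C β * X i) * htsf

theorem divDiff_braid (hij : i ≠ j) (hik : i ≠ k) (hjk : j ≠ k) (f : MvPolynomial σ R) :
    divDiff β i j (divDiff β j k (divDiff β i j f)) =
      divDiff β j k (divDiff β i j (divDiff β j k f)) :=
  mul_left_cancel₀
    (mul_ne_zero (mul_ne_zero (X_sub_X_ne_zero hij) (X_sub_X_ne_zero hik)) (X_sub_X_ne_zero hjk))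
    ((vandermonde_mul_divDiff_left β hij hik hjk f).trans
      (vandermonde_mul_divDiff_right β hij hik hjk f).symm)

theorem rename_swap_divDiff_of_disjoint (hij : i ≠ j) (hkl : k ≠ l) (hik : i ≠ k) (hil : i ≠ l)
    (hjk : j ≠ k) (hjl : j ≠ l) (hf : rename (Equiv.swap i j) f = f) :
    rename (Equiv.swap i j) (divDiff β k l f) = divDiff β k l f := by
  rw [← divDiff_eq_C_neg_mul_iff β hij] at hf ⊢
  rw [divDiff_comm β hij hkl hik hil hjk hjl, hf, divDiff_C_mul β hkl]

theorem rename_swap_left_divDiff_divDiff (hij : i ≠ j) (hik : i ≠ k) (hjk : j ≠ k)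
    (hf : rename (Equiv.swap j k) f = f) :
    rename (Equiv.swap i j) (divDiff β j k (divDiff β i j f)) =
      divDiff β j k (divDiff β i j f) := by
  rw [← divDiff_eq_C_neg_mul_iff β hjk] at hf
  rw [← divDiff_eq_C_neg_mul_iff β hij, divDiff_braid β hij hik hjk, hf, divDiff_C_mul β hij,
    divDiff_C_mul β hjk]

theorem rename_swap_right_divDiff_divDiff (hij : i ≠ j) (hik : i ≠ k) (hjk : j ≠ k)
    (hf : rename (Equiv.swap i j) f = f) :
    rename (Equiv.swap j k) (divDiff β i j (divDiff β j k f)) =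
      divDiff β i j (divDiff β j k f) := by
  rw [← divDiff_eq_C_neg_mul_iff β hij] at hf
  rw [← divDiff_eq_C_neg_mul_iff β hjk, ← divDiff_braid β hij hik hjk, hf, divDiff_C_mul β hjk,
    divDiff_C_mul β hij]

end DividedDifference

section KillCompl

variable {ρ σ τ υ R : Type*} [CommSemiring R]

theorem killCompl_X_apply {f : σ → τ} (hf : Function.Injective f) (a : σ) :
    killCompl hf (X (f a) : MvPolynomial τ R) = X a := by
  rw [← rename_X f, killCompl_rename_app]

theorem killCompl_X_of_notMem_range {f : σ → τ} (hf : Function.Injective f) {b : τ}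
    (hb : b ∉ Set.range f) : killCompl hf (X b : MvPolynomial τ R) = 0 := by
  rw [killCompl, aeval_X, dif_neg hb]

theorem killCompl_killCompl {f : σ → τ} {g : τ → υ} (hf : Function.Injective f)
    (hg : Function.Injective g) (p : MvPolynomial υ R) :
    killCompl hf (killCompl hg p) = killCompl (hg.comp hf) p := by
  suffices h : (killCompl hf).comp (killCompl hg) = killCompl (R := R) (hg.comp hf) from
    DFunLike.congr_fun h p
  ext1 c
  rw [AlgHom.comp_apply]
  by_cases hc : c ∈ Set.range g
  · obtain ⟨b, rfl⟩ := hc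
    rw [killCompl_X_apply]
    by_cases hb : b ∈ Set.range f
    · obtain ⟨a, rfl⟩ := hb
      rw [killCompl_X_apply, ← Function.comp_apply (f := g) (g := f), killCompl_X_apply]
    · rw [killCompl_X_of_notMem_range hf hb, killCompl_X_of_notMem_range]
      rintro ⟨a, ha⟩
      exact hb ⟨a, hg ha⟩
  · rw [killCompl_X_of_notMem_range hg hc, map_zero, killCompl_X_of_notMem_range]
    rintro ⟨a, ha⟩
    exact hc ⟨f a, ha⟩

theorem killCompl_rename_of_semiconj {f : σ → τ} {g : ρ → υ} (hf : Function.Injective f)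
    (hg : Function.Injective g) {e : τ ≃ υ} {s : σ ≃ ρ} (h : ∀ a, e (f a) = g (s a))
    (p : MvPolynomial τ R) :
    killCompl hg (rename e p) = rename s (killCompl hf p) := by
  suffices h : (killCompl hg).comp (rename e) = (rename s).comp (killCompl (R := R) hf) from
    DFunLike.congr_fun h p
  ext1 b
  rw [AlgHom.comp_apply, AlgHom.comp_apply, rename_X]
  by_cases hb : b ∈ Set.range f
  · obtain ⟨a, rfl⟩ := hb
    rw [h, killCompl_X_apply, killCompl_X_apply, rename_X]
  · rw [killCompl_X_of_notMem_range hf hb, map_zero, killCompl_X_of_notMem_range]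
    rintro ⟨c, hc⟩
    refine hb ⟨s.symm c, e.injective ?_⟩
    rw [h, Equiv.apply_symm_apply, hc]

theorem killCompl_rename_of_comp_eq {f : σ → τ} {g : σ → υ} (hf : Function.Injective f)
    (hg : Function.Injective g) {e : τ ≃ υ} (h : ∀ a, e (f a) = g a) (p : MvPolynomial τ R) :
    killCompl hg (rename e p) = killCompl hf p := by
  rw [killCompl_rename_of_semiconj (s := Equiv.refl σ) hf hg h, Equiv.coe_refl, rename_id_apply]

theorem rename_swap_killCompl [DecidableEq σ] [DecidableEq τ] {f : σ → τ}
    (hf : Function.Injective f) (i j : σ) (p : MvPolynomial τ R) :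
    rename (Equiv.swap i j) (killCompl hf p) =
      killCompl hf (rename (Equiv.swap (f i) (f j)) p) :=
  (killCompl_rename_of_semiconj hf hf (fun a => hf.swap_apply i j a) p).symm

theorem killCompl_divDiff {R : Type*} [CommRing R] [IsDomain R] [DecidableEq σ] [DecidableEq τ]
    {f : σ → τ} (hf : Function.Injective f) (β : R) {i j : σ} (hij : i ≠ j) (p : MvPolynomial τ R) :
    killCompl hf (divDiff β (f i) (f j) p) = divDiff β i j (killCompl hf p) := by
  refine eq_divDiff β hij ?_
  rw [rename_swap_killCompl]
  simpa only [map_mul, map_sub, map_add, map_one, killCompl_C, killCompl_X_apply] using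
    congrArg (killCompl hf) (X_sub_X_mul_divDiff β (f i) (f j) p)

end KillCompl

section ViaEmbedding

variable {α τ : Type*}

theorem viaEmbedding_swap [DecidableEq α] [DecidableEq τ] (ι : α ↪ τ) (a b : α) :
    (Equiv.swap a b).viaEmbedding ι = Equiv.swap (ι a) (ι b) := by
  ext x
  by_cases hx : x ∈ Set.range ι
  · obtain ⟨c, rfl⟩ := hx
    rw [Equiv.Perm.viaEmbedding_apply, ι.injective.swap_apply]
  · rw [Equiv.Perm.viaEmbedding_apply_of_notMem _ _ _ hx,
      Equiv.swap_apply_of_ne_of_ne] <;> rintro rfl <;> exact hx ⟨_, rfl⟩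

theorem rename_viaEmbedding_eq_self_of_adjacent [DecidableEq τ] {R : Type*} [CommSemiring R]
    {k : ℕ} (ι : Fin k ↪ τ) {p : MvPolynomial τ R}
    (hp : ∀ i j : Fin k, (j : ℕ) = i + 1 → rename (Equiv.swap (ι i) (ι j)) p = p)
    (s : Equiv.Perm (Fin k)) : rename (s.viaEmbedding ι) p = p := by
  obtain _ | k := k
  · rw [Subsingleton.elim s 1, ← Equiv.Perm.viaEmbeddingHom_apply, map_one, Equiv.Perm.coe_one,
      rename_id_apply]
  have hs := Submonoid.mem_top s
  rw [← Equiv.Perm.mclosure_swap_castSucc_succ] at hs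
  rw [← Equiv.Perm.viaEmbeddingHom_apply]
  induction hs using Submonoid.closure_induction with
  | mem s hs =>
    obtain ⟨i, rfl⟩ := hs
    rw [Equiv.Perm.viaEmbeddingHom_apply, viaEmbedding_swap, hp _ _ (by simp)]
  | one => rw [map_one, Equiv.Perm.coe_one, rename_id_apply]
  | mul s t _ _ hs ht => rw [map_mul, Equiv.Perm.coe_mul, ← rename_rename, ht, hs]

end ViaEmbedding

section ConjSwap

variable {α : Type*} [DecidableEq α] {e : Equiv.Perm α} {a b c : α}

theorem conj_swap_apply_of_ne (hca : c ≠ a) (hcb : c ≠ b) (heca : e c ≠ a) (hecb : e c ≠ b) :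
    (Equiv.swap a b * e * Equiv.swap a b) c = e c := by
  rw [Equiv.Perm.mul_apply, Equiv.Perm.mul_apply, Equiv.swap_apply_of_ne_of_ne hca hcb,
    Equiv.swap_apply_of_ne_of_ne heca hecb]

theorem conj_swap_apply_left (ha : e b ≠ a) (hb : e b ≠ b) :
    (Equiv.swap a b * e * Equiv.swap a b) a = e b := by
  rw [Equiv.Perm.mul_apply, Equiv.Perm.mul_apply, Equiv.swap_apply_left,
    Equiv.swap_apply_of_ne_of_ne ha hb]

theorem conj_swap_apply_right (ha : e a ≠ a) (hb : e a ≠ b) :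
    (Equiv.swap a b * e * Equiv.swap a b) b = e a := by
  rw [Equiv.Perm.mul_apply, Equiv.Perm.mul_apply, Equiv.swap_apply_right,
    Equiv.swap_apply_of_ne_of_ne ha hb]

theorem conj_swap_conj_swap (e : Equiv.Perm α) (a b : α) :
    Equiv.swap a b * (Equiv.swap a b * e * Equiv.swap a b) * Equiv.swap a b = e := by
  simp only [mul_assoc, Equiv.swap_mul_self, mul_one, Equiv.swap_mul_self_mul]

end ConjSwap

section FixedPointFreeInvolution

variable {n : ℕ} {z : Equiv.Perm (Fin n)} {i j : Fin n}

theorem IsFPF.apply_apply (hz : IsFPF z) (a : Fin n) : z (z a) = a :=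
  Equiv.Perm.congr_fun hz.1 a

theorem IsFPF.apply_eq_comm (hz : IsFPF z) {a b : Fin n} : z a = b ↔ z b = a :=
  ⟨fun h => h ▸ hz.apply_apply a, fun h => h ▸ hz.apply_apply b⟩

theorem IsFPF.conj_swap (hz : IsFPF z) (i j : Fin n) :
    IsFPF (Equiv.swap i j * z * Equiv.swap i j) := by
  constructor
  · ext a
    simp only [Equiv.Perm.mul_apply, Equiv.swap_apply_self, hz.apply_apply, Equiv.Perm.one_apply]
  · intro a ha
    simp only [Equiv.Perm.mul_apply, Equiv.swap_apply_eq_iff] at ha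
    exact hz.2 _ ha

theorem IsFPF.even (hz : IsFPF z) : Even n := by
  have hsupp : z.support = Finset.univ :=
    Finset.eq_univ_of_forall fun a => Equiv.Perm.mem_support.mpr (hz.2 a)
  have hdvd := Equiv.Perm.two_dvd_card_support ((sq z).trans hz.1)
  rwa [hsupp, Finset.card_fin, ← even_iff_two_dvd] at hdvd

theorem isFPF_revPerm (hn : Even n) : IsFPF (revPerm n) := by
  refine ⟨Equiv.ext Fin.rev_rev, fun a ha => ?_⟩
  have hval : n - (a + 1) = (a : ℕ) := (Fin.val_rev a).symm.trans (congrArg Fin.val ha)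
  obtain ⟨k, rfl⟩ := hn
  omega

theorem exists_ascent (hz : z ≠ revPerm n) : ∃ i j : Fin n, (j : ℕ) = i + 1 ∧ z i < z j := by
  contrapose! hz
  have hanti : StrictAnti z := by
    obtain _ | n := n
    · exact fun a => a.elim0
    refine Fin.strictAnti_iff_succ_lt.mpr fun a => (hz a.castSucc a.succ (by simp)).lt_of_ne ?_
    exact z.injective.ne (Fin.castSucc_lt_succ (i := a)).ne'
  have hrev : StrictAnti (revPerm n) := Fin.rev_strictAnti
  refine Equiv.coe_fn_injective ((hanti.range_inj hrev).mp ?_)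
  rw [z.surjective.range_eq, (revPerm n).surjective.range_eq]

theorem IsFPF.apply_ne_of_ascent (hz : IsFPF z) (hij : (j : ℕ) = i + 1) (hlt : z i < z j) :
    z i ≠ j := fun h => by
  rw [h, hz.apply_eq_comm.mp h] at hlt
  omega

/-- The one-line notation of `z`; it is ordered lexicographically. -/
def oneLine (z : Equiv.Perm (Fin n)) : Lex (Fin n → Fin n) :=
  toLex z

theorem IsFPF.oneLine_lt_conj_swap (hz : IsFPF z) (hij : (j : ℕ) = i + 1) (hlt : z i < z j) :
    oneLine z < oneLine (Equiv.swap i j * z * Equiv.swap i j) := by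
  have hi_lt_j : i < j := by omega
  have hfix (a : Fin n) (hai : a < i) (haz : a < z i) :
      z a = (Equiv.swap i j * z * Equiv.swap i j) a := by
    refine (conj_swap_apply_of_ne hai.ne (hai.trans hi_lt_j).ne (fun h => ?_) fun h => ?_).symm
    · exact haz.ne (hz.apply_eq_comm.mp h).symm
    · exact (haz.trans hlt).ne (hz.apply_eq_comm.mp h).symm
  obtain hzi | hzi := lt_or_gt_of_ne (hz.2 i)
  · refine ⟨z i, fun a ha => hfix a (ha.trans hzi) ha, ?_⟩
    change z (z i) < Equiv.swap i j (z (Equiv.swap i j (z i)))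
    rwa [Equiv.swap_apply_of_ne_of_ne hzi.ne (hz.apply_ne_of_ascent hij hlt), hz.apply_apply,
      Equiv.swap_apply_left]
  · refine ⟨i, fun a ha => hfix a ha (ha.trans hzi), ?_⟩
    change z i < (Equiv.swap i j * z * Equiv.swap i j) i
    rwa [conj_swap_apply_left (hzi.trans hlt).ne' (hz.2 j)]

end FixedPointFreeInvolution

section SymplecticFamily

variable {n : ℕ} {z : Equiv.Perm (Fin n)} {i j k : Fin n}
  {G G' : Equiv.Perm (Fin n) → MvPolynomial (Fin n) Rb}

theorem isDivDiffB_iff (hij : i ≠ j) {f g : MvPolynomial (Fin n) Rb} :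
    IsDivDiffB i j f g ↔ g = divDiff bb i j f := by
  rw [← (mul_right_injective₀ (X_sub_X_ne_zero hij)).eq_iff, X_sub_X_mul_divDiff, IsDivDiffB,
    map_mul, map_add, map_one, map_mul, rename_C, rename_X, Equiv.swap_apply_right]

theorem ne_of_val_eq_succ (hij : (j : ℕ) = i + 1) : i ≠ j :=
  fun h => by omega

theorem IsSpFam.apply_of_ascent (hG : IsSpFam n G) (hz : IsFPF z) (hij : (j : ℕ) = i + 1)
    (hlt : z i < z j) :
    G z = divDiff bb i j (G (Equiv.swap i j * z * Equiv.swap i j)) := by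
  have hzij := hz.apply_ne_of_ascent hij hlt
  have hleft := conj_swap_apply_left (hz.apply_eq_comm.not.mp hzij) (hz.2 j)
  have hright := conj_swap_apply_right (hz.2 i) hzij
  have h := hG.2 _ (hz.conj_swap i j) i j hij (hleft ▸ hz.2 j) (hright ▸ hz.2 i)
    (by rwa [hleft, hright])
  rwa [conj_swap_conj_swap, isDivDiffB_iff (ne_of_val_eq_succ hij)] at h

theorem IsSpFam.unique (hG : IsSpFam n G) (hG' : IsSpFam n G') (hz : IsFPF z) : G z = G' z := by
  induction h : oneLine z using WellFoundedGT.induction generalizing z with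
  | ind _ ih =>
    subst h
    by_cases hrev : z = revPerm n
    · rw [hrev, hG.1, hG'.1]
    · obtain ⟨i, j, hij, hlt⟩ := exists_ascent hrev
      rw [hG.apply_of_ascent hz hij hlt, hG'.apply_of_ascent hz hij hlt,
        ih _ (hz.oneLine_lt_conj_swap hij hlt) (hz.conj_swap i j) rfl]

theorem rename_oplus {p q : ℕ} (f : Fin p → Fin q) (a b : Fin p) :
    rename f (oplus a b) = oplus (f a) (f b) := by
  simp only [oplus, map_add, map_mul, rename_X, rename_C]

theorem rename_swap_spTop (hij : (j : ℕ) = i + 1) (hrev : revPerm n i = j) :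
    rename (Equiv.swap i j) (spTop n) = spTop n := by
  have hn : (i : ℕ) + j + 1 = n := by
    rw [← hrev, revPerm, Equiv.coe_fn_mk, Fin.val_rev]
    omega
  rw [spTop, map_prod]
  refine Finset.prod_equiv (Equiv.prodCongr (Equiv.swap i j) (Equiv.swap i j)) ?_ ?_
  · rintro ⟨a, b⟩
    simp only [Finset.mem_filter, Finset.mem_univ, true_and, Equiv.prodCongr_apply, Prod.map,
      Equiv.swap_apply_def, Fin.lt_def, Fin.ext_iff]
    split_ifs <;> omega
  · exact fun p _ => rename_oplus _ p.1 p.2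

theorem IsSpFam.rename_swap_of_arc_of_ascent_right (hG : IsSpFam n G) (hz : IsFPF z)
    (hij : (j : ℕ) = i + 1) (hjk : (k : ℕ) = j + 1) (hzi : z i = j) (hlt : z j < z k)
    (ih : ∀ w, IsFPF w → oneLine z < oneLine w → w j = k →
      rename (Equiv.swap j k) (G w) = G w) :
    rename (Equiv.swap i j) (G z) = G z := by
  have hne : i ≠ j ∧ i ≠ k ∧ j ≠ k := by omega
  have hzj := hz.apply_eq_comm.mp hzi
  have hzki : z k ≠ i := (hzj ▸ hlt).ne'
  have hzkj : z k ≠ j := fun h => hne.2.1 (z.injective (hzi.trans h.symm))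
  have hw := hz.conj_swap j k
  have hwi : (Equiv.swap j k * z * Equiv.swap j k) i = k := by
    rw [Equiv.Perm.mul_apply, Equiv.Perm.mul_apply, Equiv.swap_apply_of_ne_of_ne hne.1 hne.2.1,
      hzi, Equiv.swap_apply_left]
  have hwj := conj_swap_apply_left hzkj (hz.2 k)
  have hlt' : (Equiv.swap j k * z * Equiv.swap j k) i <
      (Equiv.swap j k * z * Equiv.swap j k) j := by
    have hzkk := hz.2 k
    rw [hwi, hwj]
    rw [hzj] at hlt
    omega
  have huj := conj_swap_apply_right (hw.2 i) (hw.apply_ne_of_ascent hij hlt')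
  rw [hG.apply_of_ascent hz hjk hlt, hG.apply_of_ascent hw hij hlt']
  refine rename_swap_left_divDiff_divDiff bb hne.1 hne.2.1 hne.2.2
    (ih _ (hw.conj_swap i j) ?_ (huj.trans hwi))
  exact (hz.oneLine_lt_conj_swap hjk hlt).trans (hw.oneLine_lt_conj_swap hij hlt')

theorem IsSpFam.rename_swap_of_arc_of_ascent_left (hG : IsSpFam n G) (hz : IsFPF z)
    (hij : (j : ℕ) = i + 1) (hjk : (k : ℕ) = j + 1) (hzj : z j = k) (hlt : z i < z j)
    (ih : ∀ w, IsFPF w → oneLine z < oneLine w → w i = j →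
      rename (Equiv.swap i j) (G w) = G w) :
    rename (Equiv.swap j k) (G z) = G z := by
  have hne : i ≠ j ∧ i ≠ k ∧ j ≠ k := by omega
  have hzk := hz.apply_eq_comm.mp hzj
  have hzij := hz.apply_ne_of_ascent hij hlt
  have hw := hz.conj_swap i j
  have hwk : (Equiv.swap i j * z * Equiv.swap i j) k = i := by
    rw [Equiv.Perm.mul_apply, Equiv.Perm.mul_apply,
      Equiv.swap_apply_of_ne_of_ne hne.2.1.symm hne.2.2.symm, hzk, Equiv.swap_apply_right]
  have hwj := conj_swap_apply_right (hz.2 i) hzij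
  have hlt' : (Equiv.swap i j * z * Equiv.swap i j) j <
      (Equiv.swap i j * z * Equiv.swap i j) k := by
    have hzii := hz.2 i
    rw [hwk, hwj]
    rw [hzj] at hlt
    omega
  have hui : (Equiv.swap j k * (Equiv.swap i j * z * Equiv.swap i j) * Equiv.swap j k) i = j := by
    rw [Equiv.Perm.mul_apply, Equiv.Perm.mul_apply, Equiv.swap_apply_of_ne_of_ne hne.1 hne.2.1,
      hw.apply_eq_comm.mp hwk, Equiv.swap_apply_right]
  rw [hG.apply_of_ascent hz hij hlt, hG.apply_of_ascent hw hjk hlt']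
  refine rename_swap_right_divDiff_divDiff bb hne.1 hne.2.1 hne.2.2
    (ih _ (hw.conj_swap j k) ?_ hui)
  exact (hz.oneLine_lt_conj_swap hij hlt).trans (hw.oneLine_lt_conj_swap hjk hlt')

theorem IsSpFam.rename_swap_of_arc (hG : IsSpFam n G) (hz : IsFPF z) (hij : (j : ℕ) = i + 1)
    (hzi : z i = j) : rename (Equiv.swap i j) (G z) = G z := by
  induction h : oneLine z using WellFoundedGT.induction generalizing z i j with
  | ind _ ih =>
    subst h
    have ih' (a b : Fin n) (hab : (b : ℕ) = a + 1) (w : Equiv.Perm (Fin n)) (hw : IsFPF w)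
        (hlt : oneLine z < oneLine w) (hwa : w a = b) : rename (Equiv.swap a b) (G w) = G w :=
      ih _ hlt hw hab hwa rfl
    by_cases hrev : z = revPerm n
    · rw [hrev, hG.1, rename_swap_spTop hij (hrev ▸ hzi)]
    obtain ⟨a, b, hab, hlt⟩ := exists_ascent hrev
    have hai : a ≠ i := by
      rintro rfl
      obtain rfl : b = j := by omega
      exact hz.apply_ne_of_ascent hab hlt hzi
    obtain rfl | haj := eq_or_ne a j
    · exact hG.rename_swap_of_arc_of_ascent_right hz hij hab hzi hlt (ih' _ _ hab)
    obtain rfl | hbi := eq_or_ne b i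
    · exact hG.rename_swap_of_arc_of_ascent_left hz hab hij hzi hlt (ih' _ _ hab)
    have hbj : b ≠ j := by omega
    rw [hG.apply_of_ascent hz hab hlt]
    refine rename_swap_divDiff_of_disjoint bb (ne_of_val_eq_succ hij) (ne_of_val_eq_succ hab)
      hai.symm hbi.symm haj.symm hbj.symm
      (ih' _ _ hij _ (hz.conj_swap a b) (hz.oneLine_lt_conj_swap hab hlt) ?_)
    rwa [conj_swap_apply_of_ne hai.symm hbi.symm (hzi ▸ haj.symm) (hzi ▸ hbj.symm)]

end SymplecticFamily

section InsertArc

variable {m : ℕ} {y : Equiv.Perm (Fin m)}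

/-- The increasing embedding of `Fin m` into `Fin (m + 2)` whose image misses `0` and `k.succ`. -/
def skip (k : Fin (m + 1)) : Fin m ↪ Fin (m + 2) :=
  k.succAboveEmb.trans (Fin.succEmb (m + 1))

theorem skip_apply (k : Fin (m + 1)) (a : Fin m) : skip k a = (k.succAbove a).succ := rfl

theorem mem_range_skip {k : Fin (m + 1)} {b : Fin (m + 2)} :
    b ∈ Set.range (skip k) ↔ b ≠ 0 ∧ b ≠ k.succ := by
  constructor
  · rintro ⟨a, rfl⟩
    exact ⟨Fin.succ_ne_zero _, (Fin.succ_injective _).ne (k.succAbove_ne a)⟩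
  · rintro ⟨h0, hk⟩
    obtain ⟨c, rfl⟩ := Fin.exists_succ_eq.mpr h0
    obtain ⟨a, rfl⟩ := Fin.exists_succAbove_eq ((Fin.succ_injective _).ne_iff.mp hk)
    exact ⟨a, rfl⟩

theorem zero_notMem_range_skip (k : Fin (m + 1)) : 0 ∉ Set.range (skip k) :=
  fun h => (mem_range_skip.mp h).1 rfl

theorem succ_notMem_range_skip (k : Fin (m + 1)) : k.succ ∉ Set.range (skip k) :=
  fun h => (mem_range_skip.mp h).2 rfl

theorem skip_castSucc_self (i : Fin m) : skip i.castSucc i = i.succ.succ := by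
  rw [skip_apply, Fin.succAbove_castSucc_self]

theorem swap_skip_succ (i a : Fin m) :
    Equiv.swap i.castSucc.succ i.succ.succ (skip i.succ a) = skip i.castSucc a := by
  simp only [skip_apply]
  rw [(Fin.succ_injective _).swap_apply, Fin.succ_inj]
  obtain h | rfl | h := lt_trichotomy a i
  · rw [Fin.succAbove_succ_of_le _ _ h.le, Fin.succAbove_castSucc_of_lt _ _ h]
    exact Equiv.swap_apply_of_ne_of_ne (Fin.castSucc_lt_castSucc_iff.mpr h).ne
      (Fin.castSucc_lt_succ_iff.mpr h.le).ne
  · rw [Fin.succAbove_succ_self, Fin.succAbove_castSucc_self, Equiv.swap_apply_left]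
  · rw [Fin.succAbove_succ_of_lt _ _ h, Fin.succAbove_castSucc_of_le _ _ h.le]
    exact Equiv.swap_apply_of_ne_of_ne (Fin.castSucc_lt_succ_iff.mpr h.le).ne'
      (Fin.succ_lt_succ_iff.mpr h).ne'

/-- The permutation of `Fin (m + 2)` that exchanges `0` with `k.succ` and acts as `y` on the
remaining letters. -/
def insertArc (k : Fin (m + 1)) (y : Equiv.Perm (Fin m)) : Equiv.Perm (Fin (m + 2)) :=
  Equiv.swap 0 k.succ * y.viaEmbedding (skip k)

theorem insertArc_zero (k : Fin (m + 1)) (y : Equiv.Perm (Fin m)) :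
    insertArc k y 0 = k.succ := by
  rw [insertArc, Equiv.Perm.mul_apply,
    Equiv.Perm.viaEmbedding_apply_of_notMem _ _ _ (zero_notMem_range_skip k),
    Equiv.swap_apply_left]

theorem insertArc_succ (k : Fin (m + 1)) (y : Equiv.Perm (Fin m)) :
    insertArc k y k.succ = 0 := by
  rw [insertArc, Equiv.Perm.mul_apply,
    Equiv.Perm.viaEmbedding_apply_of_notMem _ _ _ (succ_notMem_range_skip k),
    Equiv.swap_apply_right]

theorem insertArc_skip (k : Fin (m + 1)) (y : Equiv.Perm (Fin m)) (a : Fin m) :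
    insertArc k y (skip k a) = skip k (y a) := by
  have ha := mem_range_skip.mp (Set.mem_range_self (f := skip k) (y a))
  rw [insertArc, Equiv.Perm.mul_apply, Equiv.Perm.viaEmbedding_apply,
    Equiv.swap_apply_of_ne_of_ne ha.1 ha.2]

theorem forall_iff_skip (k : Fin (m + 1)) {P : Fin (m + 2) → Prop} :
    (∀ b, P b) ↔ P 0 ∧ P k.succ ∧ ∀ a, P (skip k a) := by
  refine ⟨fun h => ⟨h _, h _, fun a => h _⟩, fun ⟨h0, hk, h⟩ b => ?_⟩
  by_cases hb : b ∈ Set.range (skip k)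
  · obtain ⟨a, rfl⟩ := hb
    exact h a
  · rw [mem_range_skip, not_and_or, not_not, not_not] at hb
    obtain rfl | rfl := hb <;> assumption

theorem eq_insertArc {k : Fin (m + 1)} {e : Equiv.Perm (Fin (m + 2))} (h0 : e 0 = k.succ)
    (hk : e k.succ = 0) (h : ∀ a, e (skip k a) = skip k (y a)) : e = insertArc k y := by
  refine Equiv.ext ((forall_iff_skip k).mpr ⟨?_, ?_, fun a => ?_⟩)
  · rw [h0, insertArc_zero]
  · rw [hk, insertArc_succ]
  · rw [h, insertArc_skip]

theorem IsFPF.insertArc (hy : IsFPF y) (k : Fin (m + 1)) : IsFPF (insertArc k y) := by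
  refine ⟨Equiv.ext ((forall_iff_skip k).mpr ⟨?_, ?_, fun a => ?_⟩),
    (forall_iff_skip k).mpr ⟨?_, ?_, fun a => ?_⟩⟩
  · rw [Equiv.Perm.mul_apply, insertArc_zero, insertArc_succ, Equiv.Perm.one_apply]
  · rw [Equiv.Perm.mul_apply, insertArc_succ, insertArc_zero, Equiv.Perm.one_apply]
  · rw [Equiv.Perm.mul_apply, insertArc_skip, insertArc_skip, hy.apply_apply,
      Equiv.Perm.one_apply]
  · rw [insertArc_zero]
    exact Fin.succ_ne_zero k
  · rw [insertArc_succ]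
    exact (Fin.succ_ne_zero k).symm
  · rw [insertArc_skip]
    exact (skip k).injective.ne (hy.2 a)

theorem revPerm_add_two (m : ℕ) : revPerm (m + 2) = insertArc (Fin.last m) (revPerm m) := by
  refine eq_insertArc (Fin.rev_zero _) (Fin.rev_last _) fun a => ?_
  rw [skip_apply, skip_apply, Fin.succAbove_last]
  ext
  simp only [revPerm, Equiv.coe_fn_mk, Fin.val_rev, Fin.val_succ, Fin.val_castSucc]
  omega

theorem conj_swap_skip_insertArc (k : Fin (m + 1)) (y : Equiv.Perm (Fin m)) (a b : Fin m) :
    Equiv.swap (skip k a) (skip k b) * insertArc k y * Equiv.swap (skip k a) (skip k b) =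
      insertArc k (Equiv.swap a b * y * Equiv.swap a b) := by
  have ha := mem_range_skip.mp (Set.mem_range_self (f := skip k) a)
  have hb := mem_range_skip.mp (Set.mem_range_self (f := skip k) b)
  refine eq_insertArc ?_ ?_ fun c => ?_
  · rw [conj_swap_apply_of_ne ha.1.symm hb.1.symm] <;> rw [insertArc_zero]
    exacts [ha.2.symm, hb.2.symm]
  · rw [conj_swap_apply_of_ne ha.2.symm hb.2.symm] <;> rw [insertArc_succ]
    exacts [ha.1.symm, hb.1.symm]
  · simp only [Equiv.Perm.mul_apply, (skip k).injective.swap_apply, insertArc_skip]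

theorem conj_swap_insertArc_succ (i : Fin m) (y : Equiv.Perm (Fin m)) :
    Equiv.swap i.castSucc.succ i.succ.succ * insertArc i.succ y *
        Equiv.swap i.castSucc.succ i.succ.succ = insertArc i.castSucc y := by
  have h0 : Equiv.swap i.castSucc.succ i.succ.succ 0 = 0 :=
    Equiv.swap_apply_of_ne_of_ne (Fin.succ_ne_zero _).symm (Fin.succ_ne_zero _).symm
  refine eq_insertArc ?_ ?_ fun c => ?_
  · rw [Equiv.Perm.mul_apply, Equiv.Perm.mul_apply, h0, insertArc_zero, Equiv.swap_apply_right]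
  · rw [Equiv.Perm.mul_apply, Equiv.Perm.mul_apply, Equiv.swap_apply_left, insertArc_succ, h0]
  · rw [Equiv.Perm.mul_apply, Equiv.Perm.mul_apply, ← swap_skip_succ, Equiv.swap_apply_self,
      insertArc_skip, swap_skip_succ]

theorem prod_eq_mul_mul_prod_skip {M : Type*} [CommMonoid M] (k : Fin (m + 1))
    (f : Fin (m + 2) → M) : ∏ b, f b = f 0 * (f k.succ * ∏ a, f (skip k a)) := by
  rw [Fin.prod_univ_succ, Fin.prod_univ_succAbove _ k]
  rfl

theorem spTop_add_two (m : ℕ) :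
    spTop (m + 2) =
      (∏ t : Fin m, oplus 0 (skip (Fin.last m) t)) * rename (skip (Fin.last m)) (spTop m) := by
  have hval (a : Fin m) : (skip (Fin.last m) a : ℕ) = a + 1 := by
    rw [skip_apply, Fin.succAbove_last, Fin.val_succ, Fin.val_castSucc]
  -- the last variable occurs in no factor of `spTop (m + 2)`
  have hlast_right (a : Fin m) : ¬ (a : ℕ) + 1 + (m + 1) ≤ m := by omega
  have hlast_left (a : Fin m) : ¬ m < (a : ℕ) := a.is_lt.not_gt
  have hshift (a b : Fin m) : (a : ℕ) + 1 + (b + 1) ≤ m ↔ (a : ℕ) + b + 2 ≤ m := by omega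
  simp only [spTop, Finset.prod_filter, Fintype.prod_prod_type, map_prod, apply_ite, map_one,
    rename_oplus, prod_eq_mul_mul_prod_skip (Fin.last m), Fin.lt_def, hval, Fin.succ_last,
    Fin.val_last, Fin.val_zero]
  simp [hlast_right, hlast_left, hshift]

theorem killCompl_skip_spTop_of_ne_last {l : Fin (m + 1)} (hl : l ≠ Fin.last m) :
    killCompl (skip l).injective (spTop (m + 2)) = 0 := by
  obtain ⟨i, rfl⟩ := Fin.exists_castSucc_eq.mpr hl
  rw [spTop_add_two, map_mul, map_prod, Finset.prod_eq_zero (Finset.mem_univ i), zero_mul]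
  rw [skip_apply, Fin.succAbove_last, oplus]
  simp only [map_add, map_mul, killCompl_X_of_notMem_range _ (zero_notMem_range_skip _),
    killCompl_X_of_notMem_range _ (succ_notMem_range_skip _), mul_zero, add_zero]

theorem killCompl_skip_last_spTop (m : ℕ) :
    killCompl (skip (Fin.last m)).injective (spTop (m + 2)) = spTop m * ∏ t, X t := by
  rw [spTop_add_two, map_mul, killCompl_rename_app, map_prod, mul_comm]
  simp only [oplus, map_add, map_mul, killCompl_X_of_notMem_range _ (zero_notMem_range_skip _),
    killCompl_X_apply, zero_mul, mul_zero, add_zero, zero_add]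

end InsertArc

section Restriction

variable {m : ℕ} {y : Equiv.Perm (Fin m)}
  {G : Equiv.Perm (Fin (m + 2)) → MvPolynomial (Fin (m + 2)) Rb}

theorem IsSpFam.apply_insertArc_castSucc (hG : IsSpFam (m + 2) G) (hy : IsFPF y) (i : Fin m) :
    G (insertArc i.castSucc y) =
      divDiff bb i.castSucc.succ i.succ.succ (G (insertArc i.succ y)) := by
  rw [hG.apply_of_ascent (hy.insertArc _) (i := i.castSucc.succ) (j := i.succ.succ) rfl,
    ← conj_swap_insertArc_succ, conj_swap_conj_swap]
  rw [insertArc_succ, ← skip_castSucc_self, insertArc_skip]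
  exact Fin.succ_pos _

theorem IsSpFam.killCompl_skip_insertArc_revPerm_of_lt (hG : IsSpFam (m + 2) G) (hm : Even m)
    {k l : Fin (m + 1)} (hlk : l < k) :
    killCompl (skip l).injective (G (insertArc k (revPerm m))) = 0 := by
  induction k using Fin.reverseInduction with
  | last => rw [← revPerm_add_two, hG.1, killCompl_skip_spTop_of_ne_last hlk.ne]
  | cast i ih =>
    have hne (b : Fin (m + 1)) (hb : l < b) : b.succ ∈ Set.range (skip l) :=
      mem_range_skip.mpr ⟨Fin.succ_ne_zero b, (Fin.succ_injective _).ne hb.ne'⟩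
    have hlt := hlk.trans (Fin.castSucc_lt_succ (i := i))
    obtain ⟨a, ha⟩ := hne i.castSucc hlk
    obtain ⟨b, hb⟩ := hne i.succ hlt
    have hab : a ≠ b := by
      rintro rfl
      exact Fin.castSucc_lt_succ.ne (Fin.succ_injective _ (ha.symm.trans hb))
    rw [hG.apply_insertArc_castSucc (isFPF_revPerm hm), ← ha, ← hb, killCompl_divDiff _ _ hab,
      ih hlt, divDiff_zero bb hab]

theorem IsSpFam.killCompl_skip_insertArc_revPerm (hG : IsSpFam (m + 2) G) (hm : Even m)
    (k : Fin (m + 1)) :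
    killCompl (skip k).injective (G (insertArc k (revPerm m))) =
      spTop m * ∏ t with t.castSucc < k, X t := by
  induction k using Fin.reverseInduction with
  | last =>
    rw [← revPerm_add_two, hG.1, killCompl_skip_last_spTop]
    simp only [Fin.castSucc_lt_last, Finset.filter_true]
  | cast i ih =>
    have hsplit : ({t | t.castSucc < i.succ} : Finset (Fin m)) =
        insert i ({t | t.castSucc < i.castSucc} : Finset (Fin m)) := by
      ext t
      simp [le_iff_eq_or_lt]
    have hvanish := hG.killCompl_skip_insertArc_revPerm_of_lt hm (Fin.castSucc_lt_succ (i := i))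
    have hi := succ_notMem_range_skip i.castSucc
    have hquot := congrArg (killCompl (skip i.castSucc).injective)
      (X_sub_X_mul_divDiff bb i.castSucc.succ i.succ.succ (G (insertArc i.succ (revPerm m))))
    rw [← hG.apply_insertArc_castSucc (isFPF_revPerm hm)] at hquot
    have hswap := killCompl_rename_of_comp_eq (skip i.succ).injective (skip i.castSucc).injective
      (swap_skip_succ i) (G (insertArc i.succ (revPerm m)))
    simp only [map_mul, map_sub, map_add, map_one, killCompl_C, killCompl_X_of_notMem_range _ hi,
      ← skip_castSucc_self, killCompl_X_apply, hvanish] at hquot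
    rw [skip_castSucc_self, hswap, ih, hsplit, Finset.prod_insert (by simp)] at hquot
    refine mul_left_cancel₀ (X_ne_zero i) ?_
    linear_combination -hquot

/-- The restriction to `Fin m` of a symplectic family on `Fin (m + 2)`: it sends `y` to the
polynomial of `21 × y` with the variables of the two new letters set to zero. -/
def restrictFam (G : Equiv.Perm (Fin (m + 2)) → MvPolynomial (Fin (m + 2)) Rb)
    (y : Equiv.Perm (Fin m)) : MvPolynomial (Fin m) Rb :=
  killCompl (skip 0).injective (G (insertArc 0 y))

theorem IsSpFam.restrict (hG : IsSpFam (m + 2) G) (hm : Even m) : IsSpFam m (restrictFam G) := by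
  refine ⟨?_, fun z hz i j hij hzij hzji hlt => ?_⟩
  · rw [restrictFam, hG.killCompl_skip_insertArc_revPerm hm]
    simp only [Fin.not_lt_zero, Finset.filter_false, Finset.prod_empty, mul_one]
  · have hne := ne_of_val_eq_succ hij
    have hskip (a b : Fin m) : skip 0 a < skip 0 b ↔ a < b := by
      rw [skip_apply, skip_apply, Fin.succ_lt_succ_iff, Fin.succAbove_lt_succAbove_iff]
    have hdesc := hG.2 _ (hz.insertArc 0) (skip 0 i) (skip 0 j)
      (congrArg (· + 2) hij) (by rwa [insertArc_skip, (skip 0).injective.ne_iff])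
      (by rwa [insertArc_skip, (skip 0).injective.ne_iff])
      (by rwa [insertArc_skip, insertArc_skip, hskip])
    rw [isDivDiffB_iff ((skip 0).injective.ne hne), conj_swap_skip_insertArc] at hdesc
    rw [isDivDiffB_iff hne, restrictFam, restrictFam, hdesc, killCompl_divDiff _ _ hne]

end Restriction

section ThetaExtension

variable {m n N : ℕ} {z : Equiv.Perm (Fin n)}

theorem extPerm_castAdd (y : Equiv.Perm (Fin m)) (z : Equiv.Perm (Fin n)) (a : Fin m) :
    extPerm y z (Fin.castAdd n a) = Fin.castAdd n (y a) := by
  simp only [extPerm, Equiv.trans_apply, finSumFinEquiv_symm_apply_castAdd, Equiv.sumCongr_apply,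
    Sum.map_inl, finSumFinEquiv_apply_left]

theorem extPerm_natAdd (y : Equiv.Perm (Fin m)) (z : Equiv.Perm (Fin n)) (a : Fin n) :
    extPerm y z (Fin.natAdd m a) = Fin.natAdd m (z a) := by
  simp only [extPerm, Equiv.trans_apply, finSumFinEquiv_symm_apply_natAdd, Equiv.sumCongr_apply,
    Sum.map_inr, finSumFinEquiv_apply_right]

theorem IsFPF.extPerm {y : Equiv.Perm (Fin m)} (hy : IsFPF y) (hz : IsFPF z) :
    IsFPF (extPerm y z) := by
  refine ⟨Equiv.ext fun a => ?_, fun a => ?_⟩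
  · rw [Equiv.Perm.mul_apply, Equiv.Perm.one_apply]
    induction a using Fin.addCases with
    | left a => rw [extPerm_castAdd, extPerm_castAdd, hy.apply_apply]
    | right a => rw [extPerm_natAdd, extPerm_natAdd, hz.apply_apply]
  · induction a using Fin.addCases with
    | left a =>
      rw [extPerm_castAdd]
      exact (Fin.castAdd_injective m n).ne (hy.2 a)
    | right a =>
      rw [extPerm_natAdd]
      exact (Fin.natAdd_injective n m).ne (hz.2 a)

theorem val_theta (hn : n % 2 = 0) (a : Fin n) :
    (theta n hn a : ℕ) = if (a : ℕ) % 2 = 0 then (a : ℕ) + 1 else (a : ℕ) - 1 := rfl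

theorem isFPF_theta (hn : n % 2 = 0) : IsFPF (theta n hn) := by
  refine ⟨Equiv.ext fun a => Fin.ext ?_, fun a ha => ?_⟩
  · rw [Equiv.Perm.mul_apply, Equiv.Perm.one_apply, val_theta, val_theta]
    split_ifs <;> omega
  · have hval := congrArg Fin.val ha
    rw [val_theta] at hval
    split_ifs at hval <;> omega

theorem extPerm_theta_succ (z : Equiv.Perm (Fin n)) (hN : 2 * N % 2 = 0)
    (hN' : 2 * (N + 1) % 2 = 0) (h : 2 * N + n + 2 = 2 * (N + 1) + n) :
    extPerm (theta (2 * (N + 1)) hN') z =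
      (finCongr h).permCongr (insertArc 0 (extPerm (theta (2 * N) hN) z)) := by
  have hleft (a : Fin (2 * N)) : finCongr h (skip 0 (Fin.castAdd n a)) =
      Fin.castAdd n (a.addNat 2) := rfl
  have hright (a : Fin n) : finCongr h (skip 0 (Fin.natAdd (2 * N) a)) =
      Fin.natAdd (2 * (N + 1)) a := by
    ext
    simp only [finCongr_apply, Fin.val_cast, skip_apply, Fin.succAbove_zero, Fin.val_succ,
      Fin.val_natAdd]
    omega
  have htheta (a : Fin (2 * N)) :
      theta (2 * (N + 1)) hN' (a.addNat 2) = (theta (2 * N) hN a).addNat 2 := by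
    ext
    simp only [val_theta, Fin.val_addNat, Nat.add_mod_right]
    split_ifs <;> omega
  rw [← Equiv.symm_apply_eq]
  refine eq_insertArc ?_ ?_ fun a => ?_ <;>
    rw [Equiv.permCongr_symm_apply, Equiv.symm_apply_eq]
  · exact extPerm_castAdd _ z ⟨0, by omega⟩
  · exact extPerm_castAdd _ z ⟨1, by omega⟩
  · induction a using Fin.addCases with
    | left a => rw [hleft, extPerm_castAdd, extPerm_castAdd, hleft, htheta]
    | right a => rw [hright, extPerm_natAdd, extPerm_natAdd, hright]

theorem extPerm_theta_lt_of_odd (z : Equiv.Perm (Fin n)) (hN : 2 * N % 2 = 0)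
    {i j : Fin (2 * N + n)} (hij : (j : ℕ) = i + 1) (hj : (j : ℕ) ≤ 2 * N)
    (hi : ¬ (i : ℕ) % 2 = 0) :
    extPerm (theta (2 * N) hN) z i < extPerm (theta (2 * N) hN) z j := by
  obtain ⟨a, rfl⟩ : ∃ a, i = Fin.castAdd n a := ⟨⟨i, by omega⟩, rfl⟩
  induction j using Fin.addCases with
  | left b =>
    rw [extPerm_castAdd, extPerm_castAdd, Fin.lt_def]
    simp only [Fin.val_castAdd, val_theta] at hij hi ⊢
    split_ifs <;> omega
  | right b =>
    rw [extPerm_castAdd, extPerm_natAdd, Fin.lt_def]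
    exact (theta (2 * N) hN a).is_lt.trans_le (Nat.le_add_right _ _)

end ThetaExtension

section Stability

variable {m n k N N' : ℕ} {z : Equiv.Perm (Fin n)}

theorem truncVars_eq_killCompl (h : k ≤ m) (f : MvPolynomial (Fin m) Rb) :
    truncVars k m f = killCompl (Fin.castLE_injective h) f := by
  suffices heq : aeval (fun i : Fin m => if h : (i : ℕ) < k then X ⟨i, h⟩ else 0) =
      killCompl (R := Rb) (Fin.castLE_injective h) from DFunLike.congr_fun heq f
  ext1 i
  rw [aeval_X]
  split_ifs with hi
  · exact (killCompl_X_apply (Fin.castLE_injective h) ⟨i, hi⟩).symm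
  · refine (killCompl_X_of_notMem_range _ ?_).symm
    rintro ⟨a, rfl⟩
    exact hi a.is_lt

theorem truncVars_killCompl_skip_zero (h : k ≤ m) {f : MvPolynomial (Fin (m + 2)) Rb}
    (hf : ∀ i j : Fin (m + 2), (j : ℕ) = i + 1 → (j : ℕ) ≤ k + 1 →
      rename (Equiv.swap i j) f = f) :
    truncVars k m (killCompl (skip 0).injective f) = truncVars k (m + 2) f := by
  have h₂ : k + 2 ≤ m + 2 := Nat.add_le_add_right h 2
  have hsymm := rename_viaEmbedding_eq_self_of_adjacent (Fin.castLEEmb h₂) (p := f)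
    (fun i j hij => hf _ _ hij (Nat.lt_succ_iff.mp j.is_lt)) (finRotate (k + 2) * finRotate (k + 2))
  have hrotate (b : Fin (k + 1)) : finRotate (k + 2) b.castSucc = b.succ := finRotate_of_lt b.is_lt
  have hrotate_sq (a : Fin k) :
      (finRotate (k + 2) * finRotate (k + 2)) a.castSucc.castSucc = a.succ.succ := by
    rw [Equiv.Perm.mul_apply, hrotate, Fin.succ_castSucc, hrotate]
  rw [truncVars_eq_killCompl h, truncVars_eq_killCompl (h.trans (Nat.le_add_right m 2)),
    killCompl_killCompl]
  conv_lhs => rw [← hsymm]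
  refine killCompl_rename_of_comp_eq _ _ (fun a => ?_) f
  exact (Equiv.Perm.viaEmbedding_apply _ (Fin.castLEEmb h₂) a.castSucc.castSucc).trans
    (congrArg _ (hrotate_sq a))

theorem IsSpFam.exists_truncVars_eq (hm : m + 2 = n) (heven : Even m) (hk : k ≤ m)
    {G : Equiv.Perm (Fin n) → MvPolynomial (Fin n) Rb} (hG : IsSpFam n G)
    {y : Equiv.Perm (Fin m)} (hz : z = (finCongr hm).permCongr (insertArc 0 y))
    (hsymm : ∀ i j : Fin n, (j : ℕ) = i + 1 → (j : ℕ) ≤ k + 1 →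
      rename (Equiv.swap i j) (G z) = G z) :
    ∃ G₀, IsSpFam m G₀ ∧ truncVars k m (G₀ y) = truncVars k n (G z) := by
  subst hm
  obtain rfl : z = insertArc 0 y := hz
  exact ⟨restrictFam G, hG.restrict heven, truncVars_killCompl_skip_zero hk hsymm⟩

theorem IsSpFam.rename_swap_extPerm_theta
    {G : Equiv.Perm (Fin (2 * N + n)) → MvPolynomial (Fin (2 * N + n)) Rb}
    (hG : IsSpFam (2 * N + n) G) (hz : IsFPF z) (hN : 2 * N % 2 = 0) {i j : Fin (2 * N + n)}
    (hij : (j : ℕ) = i + 1) (hj : (j : ℕ) ≤ 2 * N) :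
    rename (Equiv.swap i j) (G (extPerm (theta (2 * N) hN) z)) =
      G (extPerm (theta (2 * N) hN) z) := by
  have hfpf := (isFPF_theta hN).extPerm hz
  by_cases hi : (i : ℕ) % 2 = 0
  · refine hG.rename_swap_of_arc hfpf hij (Fin.ext ?_)
    obtain ⟨a, rfl⟩ : ∃ a, i = Fin.castAdd n a := ⟨⟨i, by omega⟩, rfl⟩
    rw [Fin.val_castAdd] at hi
    rw [hij, extPerm_castAdd, Fin.val_castAdd, val_theta, if_pos hi, Fin.val_castAdd]
  · rw [hG.apply_of_ascent hfpf hij (extPerm_theta_lt_of_odd z hN hij hj hi)]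
    exact rename_swap_divDiff bb (ne_of_val_eq_succ hij) _

theorem IsSpFam.truncVars_extPerm_theta_eq_of_le (hNN' : N ≤ N') (hk : k ≤ 2 * N) (hz : IsFPF z)
    {G : Equiv.Perm (Fin (2 * N + n)) → MvPolynomial (Fin (2 * N + n)) Rb}
    (hG : IsSpFam (2 * N + n) G)
    {G' : Equiv.Perm (Fin (2 * N' + n)) → MvPolynomial (Fin (2 * N' + n)) Rb}
    (hG' : IsSpFam (2 * N' + n) G') (hN : 2 * N % 2 = 0) (hN' : 2 * N' % 2 = 0) :
    truncVars k (2 * N + n) (G (extPerm (theta (2 * N) hN) z)) =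
      truncVars k (2 * N' + n) (G' (extPerm (theta (2 * N') hN') z)) := by
  induction N', hNN' using Nat.le_induction with
  | base => rw [hG.unique hG' ((isFPF_theta hN).extPerm hz)]
  | succ L hL ih =>
    have hLeven : 2 * L % 2 = 0 := Nat.mul_mod_right 2 L
    have hy := (isFPF_theta hLeven).extPerm hz
    have hlen : 2 * L + n + 2 = 2 * (L + 1) + n := by omega
    obtain ⟨G₀, hG₀, heq⟩ := hG'.exists_truncVars_eq (k := k) hlen hy.even (by omega)
      (extPerm_theta_succ z hLeven hN' hlen)
      fun i j hij hj => hG'.rename_swap_extPerm_theta hz hN' hij (by omega)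
    rw [← heq]
    exact ih hG₀ hLeven

theorem IsSpFam.rename_truncVars_extPerm_theta (hk : k ≤ 2 * N) (hz : IsFPF z)
    {G : Equiv.Perm (Fin (2 * N + n)) → MvPolynomial (Fin (2 * N + n)) Rb}
    (hG : IsSpFam (2 * N + n) G) (hN : 2 * N % 2 = 0) (s : Equiv.Perm (Fin k)) :
    rename s (truncVars k (2 * N + n) (G (extPerm (theta (2 * N) hN) z))) =
      truncVars k (2 * N + n) (G (extPerm (theta (2 * N) hN) z)) := by
  have hkM : k ≤ 2 * N + n := hk.trans (Nat.le_add_right _ _)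
  have hinj := Fin.castLE_injective hkM
  rw [truncVars_eq_killCompl hkM,
    ← killCompl_rename_of_semiconj hinj hinj
      (fun a => Equiv.Perm.viaEmbedding_apply s (Fin.castLEEmb hkM) a),
    rename_viaEmbedding_eq_self_of_adjacent _ fun i j hij =>
      hG.rename_swap_extPerm_theta hz hN hij (j.is_lt.le.trans hk)]

end Stability

theorem statement8_general {n k N N' : ℕ} {z : Equiv.Perm (Fin n)} (hz : IsFPF z)
    (hk : k ≤ 2 * N) (hk' : k ≤ 2 * N')
    {G : Equiv.Perm (Fin (2 * N + n)) → MvPolynomial (Fin (2 * N + n)) Rb}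
    (hG : IsSpFam (2 * N + n) G)
    {G' : Equiv.Perm (Fin (2 * N' + n)) → MvPolynomial (Fin (2 * N' + n)) Rb}
    (hG' : IsSpFam (2 * N' + n) G') :
    truncVars k (2 * N + n) (G (extPerm (theta (2 * N) (Nat.mul_mod_right 2 N)) z)) =
      truncVars k (2 * N' + n) (G' (extPerm (theta (2 * N') (Nat.mul_mod_right 2 N')) z)) ∧
    ∀ σ : Equiv.Perm (Fin k),
      rename (⇑σ)
          (truncVars k (2 * N + n) (G (extPerm (theta (2 * N) (Nat.mul_mod_right 2 N)) z))) =
        truncVars k (2 * N + n) (G (extPerm (theta (2 * N) (Nat.mul_mod_right 2 N)) z)) := by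
  refine ⟨?_, hG.rename_truncVars_extPerm_theta hk hz _⟩
  obtain h | h := le_total N N'
  · exact hG.truncVars_extPerm_theta_eq_of_le h hk hz hG' _ _
  · exact (hG'.truncVars_extPerm_theta_eq_of_le h hk' hz hG _ _).symm

theorem statement8 (n : ℕ) (hpos : 0 < n) (hev : n % 2 = 0)
    (z : Equiv.Perm (Fin n)) (hz : IsFPF z)
    (N N' : ℕ) (hN : n ≤ N) (hN' : n ≤ N')
    (G : Equiv.Perm (Fin (2 * N + n)) → MvPolynomial (Fin (2 * N + n)) Rb)
    (hG : IsSpFam (2 * N + n) G)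
    (G' : Equiv.Perm (Fin (2 * N' + n)) → MvPolynomial (Fin (2 * N' + n)) Rb)
    (hG' : IsSpFam (2 * N' + n) G') :
    truncVars n (2 * N + n) (G (extPerm (theta (2 * N) (by omega)) z)) =
      truncVars n (2 * N' + n) (G' (extPerm (theta (2 * N') (by omega)) z)) ∧
    ∀ σ : Equiv.Perm (Fin n),
      rename (⇑σ) (truncVars n (2 * N + n) (G (extPerm (theta (2 * N) (by omega)) z))) =
        truncVars n (2 * N + n) (G (extPerm (theta (2 * N) (by omega)) z)) := by
  exact statement8_general hz (by omega) (by omega) hG hG'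

end
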